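/- Let λ > 0, ε > 0, z ∈ ℝ, and r ∈ (0, ∞]. Then P(there exists t ∈ [0, r) with ε·B((1 − e^{−2λt})/(2λ)) = z) = 2·(1 − Φ(|z|·√(2λ)/(ε·√(1 − e^{−2λr})))), where for r = ∞ one reads e^{−2λr} = 0. -/

import Mathlib

open MeasureTheory ProbabilityTheory Filter Topology Set
open scoped ENNReal

/-- `B` is a standard Brownian motion (for times `t ≥ 0`) on the probability space `(Ω, P)`. -/
def IsBrownianMotion {Ω : Type*} [MeasurableSpace Ω] (P : Measure Ω) (B : ℝ → Ω → ℝ) : Prop :=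
  (∀ t : ℝ, Measurable (B t)) ∧
  (∀ᵐ ω ∂P, B 0 ω = 0 ∧ ContinuousOn (fun t => B t ω) (Set.Ici (0 : ℝ))) ∧
  (∀ s t : ℝ, 0 ≤ s → s ≤ t →
    Measure.map (fun ω => B t ω - B s ω) P = gaussianReal 0 (Real.toNNReal (t - s))) ∧
  (∀ t : ℕ → ℝ, Monotone t → (∀ i, 0 ≤ t i) →
    iIndepFun (fun i ω => B (t (i + 1)) ω - B (t i) ω) P)

/-- The standard Gaussian distribution function `Φ`. -/
noncomputable def gaussPhi (x : ℝ) : ℝ :=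
  ∫ y in Set.Iic x, (1 / Real.sqrt (2 * Real.pi)) * Real.exp (-(y ^ 2) / 2)

/-!
Reflecting a symmetric random walk `S` at its first passage over `a ≥ 0` preserves its law, and one
of `S n` and its reflection lies above `a` as soon as the passage occurs. Hence (Lévy)
`P (max S ≥ a) ≤ 2 P (S n ≥ a)`; conversely `2 P (S n ≥ a + δ) ≤ P (max S ≥ a)` up to the
probability of some step being at least `δ`. For Brownian motion sampled on the grid of mesh
`T / n`, that error vanishes as `n → ∞` by uniform continuity of the paths, and `δ → 0` gives the
reflection principle `P (B hits a before T) = 2 (1 - Φ (a / √T))`. The statement then follows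
because `t ↦ (1 - e^{-2λt}) / (2λ)` maps `[0, r)` onto an interval `[0, T)`.
-/

section SymmetricWalk

/-- The position after `n` steps of the walk from `0` with step sequence `x`. -/
def walk (n : ℕ) (x : ℕ → ℝ) : ℝ := ∑ i ∈ Finset.range n, x i

/-- The step sequence of the walk reflected at time `k`: every step from index `k` on changes
sign. -/
def reflectFrom (k : ℕ) (x : ℕ → ℝ) : ℕ → ℝ := fun i => if i < k then x i else -x i

/-- The step sequences whose walk enters `[a, ∞)` for the first time at time `k`. -/
def firstPassage (a : ℝ) (k : ℕ) : Set (ℕ → ℝ) :=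
  {x | a ≤ walk k x ∧ ∀ j < k, walk j x < a}

@[fun_prop]
lemma measurable_walk (n : ℕ) : Measurable (walk n) := by
  unfold walk
  fun_prop

lemma measurableSet_firstPassage (a : ℝ) (k : ℕ) : MeasurableSet (firstPassage a k) := by
  have hbefore : MeasurableSet {x : ℕ → ℝ | ∀ j < k, walk j x < a} := by
    simp only [ofPred_forall]
    exact .iInter fun j => .iInter fun _ => measurableSet_lt (measurable_walk j) measurable_const
  exact (measurableSet_le measurable_const (measurable_walk k)).inter hbefore

lemma eq_of_mem_firstPassage {a : ℝ} {j k : ℕ} {x : ℕ → ℝ} (hj : x ∈ firstPassage a j)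
    (hk : x ∈ firstPassage a k) : j = k := by
  rcases lt_trichotomy j k with h | h | h
  · exact absurd hj.1 (hk.2 j h).not_ge
  · exact h
  · exact absurd hk.1 (hj.2 k h).not_ge

lemma exists_mem_firstPassage {a : ℝ} {k : ℕ} {x : ℕ → ℝ} (hk : a ≤ walk k x) :
    ∃ j ≤ k, x ∈ firstPassage a j := by
  classical
  have hex : ∃ j, a ≤ walk j x := ⟨k, hk⟩
  exact ⟨Nat.find hex, Nat.find_min' hex hk, Nat.find_spec hex,
    fun j hj => not_le.1 (Nat.find_min hex hj)⟩

lemma exists_step_ge_of_mem_firstPassage {a δ : ℝ} (ha : 0 ≤ a) (hδ : 0 < δ) {k : ℕ}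
    {x : ℕ → ℝ} (hx : x ∈ firstPassage a k) (hk : a + δ ≤ walk k x) : ∃ i < k, δ ≤ x i := by
  cases k with
  | zero =>
    simp only [walk, Finset.range_zero, Finset.sum_empty] at hk
    linarith
  | succ i =>
    have hi := hx.2 i i.lt_succ_self
    simp only [walk, Finset.sum_range_succ] at hi hk
    exact ⟨i, i.lt_succ_self, by linarith⟩

lemma walk_reflectFrom_of_le {j k : ℕ} (h : j ≤ k) (x : ℕ → ℝ) :
    walk j (reflectFrom k x) = walk j x :=
  Finset.sum_congr rfl fun _ hi => if_pos ((Finset.mem_range.1 hi).trans_le h)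

lemma walk_reflectFrom_of_ge {k n : ℕ} (h : k ≤ n) (x : ℕ → ℝ) :
    walk n (reflectFrom k x) = 2 * walk k x - walk n x := by
  have hbefore := walk_reflectFrom_of_le le_rfl x (k := k)
  have hafter : ∑ i ∈ Finset.Ico k n, reflectFrom k x i = -∑ i ∈ Finset.Ico k n, x i := by
    rw [← Finset.sum_neg_distrib]
    exact Finset.sum_congr rfl fun i hi => if_neg (Finset.mem_Ico.1 hi).1.not_gt
  simp only [walk] at *
  rw [← Finset.sum_range_add_sum_Ico _ h, ← Finset.sum_range_add_sum_Ico x h, hbefore, hafter]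
  ring

lemma reflectFrom_mem_firstPassage_iff {a : ℝ} {k : ℕ} {x : ℕ → ℝ} :
    reflectFrom k x ∈ firstPassage a k ↔ x ∈ firstPassage a k := by
  refine and_congr (by rw [walk_reflectFrom_of_le le_rfl]) (forall₂_congr fun j hj => ?_)
  rw [walk_reflectFrom_of_le hj.le]

variable {Ω : Type*} [MeasurableSpace Ω] {P : Measure Ω} {X : ℕ → Ω → ℝ}

lemma identDistrib_reflectFrom (hX : iIndepFun X P)
    (hsymm : ∀ i, IdentDistrib (fun ω => -X i ω) (X i) P P) (k : ℕ) :
    IdentDistrib (fun ω => reflectFrom k (X · ω)) (fun ω => (X · ω)) P P := by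
  refine .pi (X := fun i ω => if i < k then X i ω else -X i ω) (fun i => ?_) ?_ hX
  · by_cases hi : i < k
    · simpa only [hi, if_true] using .refl (hsymm i).aemeasurable_snd
    · simpa only [hi, if_false] using hsymm i
  · refine hX.comp (fun i y => if i < k then y else -y) fun i => ?_
    split_ifs <;> fun_prop

lemma measure_exists_firstPassage (hX : AEMeasurable (fun ω => (X · ω)) P) (a : ℝ) (n : ℕ)
    {E : ℕ → Set (ℕ → ℝ)} (hE : ∀ k, MeasurableSet (E k)) :
    P {ω | ∃ k ≤ n, (X · ω) ∈ firstPassage a k ∩ E k}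
      = ∑ k ∈ Finset.range (n + 1), P {ω | (X · ω) ∈ firstPassage a k ∩ E k} := by
  have hunion : {ω | ∃ k ≤ n, (X · ω) ∈ firstPassage a k ∩ E k}
      = ⋃ k ∈ Finset.range (n + 1), {ω | (X · ω) ∈ firstPassage a k ∩ E k} := by
    ext ω
    simp only [mem_ofPred_eq, mem_iUnion, Finset.mem_range, Nat.lt_succ_iff, exists_prop]
  rw [hunion]
  refine measure_biUnion_finset₀ (fun j _ k _ hjk => Disjoint.aedisjoint ?_) fun k _ =>
    hX.nullMeasurableSet_preimage ((measurableSet_firstPassage a k).inter (hE k))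
  exact Set.disjoint_left.2 fun ω hj hk => hjk (eq_of_mem_firstPassage hj.1 hk.1)

/-- By `walk_reflectFrom_of_ge`, `2 * walk k x - walk n x` is the endpoint of the reflected walk. -/
theorem measure_exists_firstPassage_reflect (hX : iIndepFun X P)
    (hsymm : ∀ i, IdentDistrib (fun ω => -X i ω) (X i) P P) (a c : ℝ) (n : ℕ) :
    P {ω | ∃ k ≤ n, (X · ω) ∈ firstPassage a k ∩ {x | c ≤ 2 * walk k x - walk n x}}
      = P {ω | ∃ k ≤ n, (X · ω) ∈ firstPassage a k ∩ {x | c ≤ walk n x}} := by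
  have hm : AEMeasurable (fun ω => (X · ω)) P :=
    aemeasurable_pi_lambda _ fun i => (hsymm i).aemeasurable_snd
  have hE : MeasurableSet {x | c ≤ walk n x} := measurableSet_le (by fun_prop) (by fun_prop)
  rw [measure_exists_firstPassage hm a n fun k => measurableSet_le (by fun_prop) (by fun_prop),
    measure_exists_firstPassage hm a n fun _ => hE]
  refine Finset.sum_congr rfl fun k hk => ?_
  have hkn : k ≤ n := Nat.lt_succ_iff.1 (Finset.mem_range.1 hk)
  convert! (identDistrib_reflectFrom hX hsymm k).measure_mem_eq
    ((measurableSet_firstPassage a k).inter hE) using 2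
  ext ω
  simp only [mem_preimage, mem_inter_iff, mem_ofPred_eq, reflectFrom_mem_firstPassage_iff,
    walk_reflectFrom_of_ge hkn]

theorem measure_exists_walk_ge_le (hX : iIndepFun X P)
    (hsymm : ∀ i, IdentDistrib (fun ω => -X i ω) (X i) P P) (a : ℝ) (n : ℕ) :
    P {ω | ∃ k ≤ n, a ≤ walk k (X · ω)} ≤ 2 * P {ω | a ≤ walk n (X · ω)} := by
  set U := {ω | ∃ k ≤ n, (X · ω) ∈ firstPassage a k ∩ {x | a ≤ walk n x}}
  set V := {ω | ∃ k ≤ n, (X · ω) ∈ firstPassage a k ∩ {x | a ≤ 2 * walk k x - walk n x}}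
  have hsub : {ω | ∃ k ≤ n, a ≤ walk k (X · ω)} ⊆ U ∪ V := by
    rintro ω ⟨k, hkn, hk⟩
    obtain ⟨j, hjk, hj⟩ := exists_mem_firstPassage hk
    rcases le_total a (walk n (X · ω)) with h | h
    · exact .inl ⟨j, hjk.trans hkn, hj, h⟩
    · exact .inr ⟨j, hjk.trans hkn, hj, by simp only [mem_ofPred_eq]; linarith [hj.1]⟩
  calc P {ω | ∃ k ≤ n, a ≤ walk k (X · ω)}
      ≤ P U + P V := (measure_mono hsub).trans (measure_union_le U V)
    _ = 2 * P U := by rw [measure_exists_firstPassage_reflect hX hsymm, two_mul]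
    _ ≤ 2 * P {ω | a ≤ walk n (X · ω)} := by
        gcongr
        exact fun ω ⟨_, _, _, h⟩ => h

/-- If both the walk and its reflection end above `a + δ`, then so does their average, the position
at the first passage over `a`, which can only be reached by a step of size at least `δ`. -/
theorem two_mul_measure_walk_ge_le (hX : iIndepFun X P)
    (hsymm : ∀ i, IdentDistrib (fun ω => -X i ω) (X i) P P) {a δ : ℝ} (ha : 0 ≤ a)
    (hδ : 0 < δ) (n : ℕ) :
    2 * P {ω | a + δ ≤ walk n (X · ω)}
      ≤ P {ω | ∃ k ≤ n, a ≤ walk k (X · ω)} + P {ω | ∃ i < n, δ ≤ X i ω} := by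
  set A := {ω | a + δ ≤ walk n (X · ω)}
  set V := {ω | ∃ k ≤ n, (X · ω) ∈ firstPassage a k ∩ {x | a + δ ≤ 2 * walk k x - walk n x}}
  have hm : AEMeasurable (fun ω => (X · ω)) P :=
    aemeasurable_pi_lambda _ fun i => (hsymm i).aemeasurable_snd
  have hA : NullMeasurableSet A P :=
    nullMeasurableSet_le aemeasurable_const ((measurable_walk n).comp_aemeasurable hm)
  have hAV : P A ≤ P V := by
    rw [measure_exists_firstPassage_reflect hX hsymm]
    refine measure_mono fun ω hω => ?_
    obtain ⟨k, hkn, hk⟩ := exists_mem_firstPassage ((le_add_of_nonneg_right hδ.le).trans hω)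
    exact ⟨k, hkn, hk, hω⟩
  have hunion : A ∪ V ⊆ {ω | ∃ k ≤ n, a ≤ walk k (X · ω)} := by
    rintro ω (hω | ⟨k, hkn, hk, -⟩)
    · exact ⟨n, le_rfl, (le_add_of_nonneg_right hδ.le).trans hω⟩
    · exact ⟨k, hkn, hk.1⟩
  have hinter : A ∩ V ⊆ {ω | ∃ i < n, δ ≤ X i ω} := by
    rintro ω ⟨hωn, k, hkn, hk, hωk⟩
    simp only [A, mem_ofPred_eq] at hωn hωk
    obtain ⟨i, hi, hxi⟩ := exists_step_ge_of_mem_firstPassage ha hδ hk (by linarith)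
    exact ⟨i, hi.trans_le hkn, hxi⟩
  calc 2 * P A
      ≤ P A + P V := by rw [two_mul]; gcongr
    _ = P (A ∪ V) + P (A ∩ V) := (measure_union_add_inter₀' hA V).symm
    _ ≤ P {ω | ∃ k ≤ n, a ≤ walk k (X · ω)} + P {ω | ∃ i < n, δ ≤ X i ω} :=
        add_le_add (measure_mono hunion) (measure_mono hinter)

end SymmetricWalk

section GaussianTail

lemma gaussPhi_eq_measureReal_Iic (x : ℝ) : gaussPhi x = (gaussianReal 0 1).real (Iic x) := by
  rw [measureReal_def, gaussianReal_apply_eq_integral 0 one_ne_zero,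
    ENNReal.toReal_ofReal (integral_nonneg fun y => gaussianPDFReal_nonneg 0 1 y)]
  simp [gaussPhi, gaussianPDFReal]

lemma continuous_cdf (μ : Measure ℝ) [IsProbabilityMeasure μ] [NullSingletonClass μ] :
    Continuous (cdf μ) := by
  refine continuous_iff_continuousAt.2 fun x => ?_
  have hjump := (cdf μ).measure_singleton x
  rw [measure_cdf, measure_singleton, eq_comm, ENNReal.ofReal_eq_zero, sub_nonpos] at hjump
  exact (monotone_cdf μ).continuousAt_iff_leftLim_eq_rightLim.2 <|
    ((monotone_cdf μ).leftLim_le le_rfl).antisymm hjump |>.trans ((cdf μ).rightLim_eq x).symm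

lemma continuous_gaussPhi : Continuous gaussPhi := by
  have := nullSingletonClass_gaussianReal (μ := 0) (v := 1) one_ne_zero
  convert continuous_cdf (gaussianReal 0 1) using 1
  ext x
  rw [gaussPhi_eq_measureReal_Iic, cdf_eq_real]

lemma gaussianReal_real_Ici {T : ℝ} (hT : 0 < T) (c : ℝ) :
    (gaussianReal 0 T.toNNReal).real (Ici c) = 1 - gaussPhi (c / √T) := by
  have := nullSingletonClass_gaussianReal (μ := 0) (v := T.toNNReal) (by simpa using hT)
  have hstd : (gaussianReal 0 T.toNNReal).map (fun y => y / √T) = gaussianReal 0 1 := by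
    rw [gaussianReal_map_div_const, zero_div]
    congr 1
    ext
    simp [Real.sq_sqrt hT.le, hT.le, hT.ne']
  have hIic : (fun y => y / √T) ⁻¹' Iic (c / √T) = Iic c := by
    ext y
    simp [div_le_div_iff_of_pos_right (Real.sqrt_pos.2 hT)]
  rw [gaussPhi_eq_measureReal_Iic, ← hstd, map_measureReal_apply (by fun_prop) measurableSet_Iic,
    hIic, ← probReal_compl_eq_one_sub measurableSet_Iic, compl_Iic]
  exact measureReal_congr Ioi_ae_eq_Ici.symm

end GaussianTail

section Grid

variable {T : ℝ} {f : ℝ → ℝ}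

lemma natCast_mul_div_mem_Icc (hT : 0 ≤ T) {k n : ℕ} (hk : k ≤ n) : k * (T / n) ∈ Icc 0 T := by
  refine ⟨by positivity, ?_⟩
  rw [mul_div_left_comm]
  exact mul_le_of_le_one_right hT (div_le_one_of_le₀ (by exact_mod_cast hk) n.cast_nonneg)

lemma eventually_exists_grid_gt (hf : ContinuousOn f (Icc 0 T)) {s c : ℝ} (hs : s ∈ Icc 0 T)
    (hc : c < f s) : ∀ᶠ n : ℕ in atTop, ∃ k ≤ n, c < f (k * (T / n)) := by
  rcases hs.1.eq_or_lt with rfl | hs0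
  · exact .of_forall fun n => ⟨0, n.zero_le, by simpa using hc⟩
  have hT : 0 < T := hs0.trans_le hs.2
  have hkn (n : ℕ) : ⌊s / T * n⌋₊ ≤ n :=
    Nat.floor_le_of_le (mul_le_of_le_one_left n.cast_nonneg ((div_le_one hT).2 hs.2))
  have hlim : Tendsto (fun n : ℕ => ⌊s / T * n⌋₊ * (T / n)) atTop (𝓝[Icc 0 T] s) := by
    refine tendsto_nhdsWithin_iff.2
      ⟨?_, .of_forall fun n => natCast_mul_div_mem_Icc hT.le (hkn n)⟩
    have h := ((tendsto_nat_floor_mul_div_atTop (R := ℝ) (a := s / T) (by positivity)).comp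
      tendsto_natCast_atTop_atTop).mul_const T
    rw [div_mul_cancel₀ s hT.ne'] at h
    exact h.congr fun n => by simp only [Function.comp_apply]; ring
  filter_upwards [((hf s hs).tendsto.comp hlim).eventually (lt_mem_nhds hc)] with n hn
  exact ⟨_, hkn n, hn⟩

lemma eventually_grid_sub_lt (hT : 0 ≤ T) (hf : ContinuousOn f (Icc 0 T)) {δ : ℝ} (hδ : 0 < δ) :
    ∀ᶠ n : ℕ in atTop, ∀ i < n, f ((i + 1 : ℕ) * (T / n)) - f (i * (T / n)) < δ := by
  obtain ⟨η, hη, hfη⟩ := Metric.uniformContinuousOn_iff.1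
    (isCompact_Icc.uniformContinuousOn_of_continuous hf) δ hδ
  filter_upwards [(tendsto_const_div_atTop_nhds_zero_nat T).eventually (gt_mem_nhds hη)]
    with n hn i hi
  refine (le_abs_self _).trans_lt (hfη _ (natCast_mul_div_mem_Icc hT hi) _
    (natCast_mul_div_mem_Icc hT hi.le) ?_)
  rwa [Real.dist_eq, ← sub_mul, Nat.cast_succ, add_sub_cancel_left, one_mul,
    abs_of_nonneg (by positivity)]

end Grid

lemma measure_le_of_ae_frequently_mem {α : Type*} [MeasurableSpace α] {μ : Measure α} {E : Set α}
    {G : ℕ → Set α} {c : ℝ≥0∞} (hG : ∃ᶠ n in atTop, μ (G n) ≤ c)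
    (hE : ∀ᵐ x ∂μ, x ∈ E → ∀ᶠ n in atTop, x ∈ G n) : μ E ≤ c := by
  let H : ℕ → Set α := fun m => ⋂ n ≥ m, G n
  have hH : Monotone H := fun m m' hm =>
    biInter_subset_biInter_left fun n hn => le_trans hm hn
  calc μ E ≤ μ (⋃ m, H m) := measure_mono_ae <| by
        filter_upwards [hE] with x hx hxE
        obtain ⟨m, hm⟩ := eventually_atTop.1 (hx hxE)
        exact mem_iUnion.2 ⟨m, mem_iInter₂.2 hm⟩
    _ = ⨆ m, μ (H m) := hH.measure_iUnion
    _ ≤ c := iSup_le fun m => by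
        obtain ⟨n, hmn, hn⟩ := frequently_atTop.1 hG m
        exact (measure_mono (biInter_subset_of_mem hmn)).trans hn

namespace IsBrownianMotion

variable {Ω : Type*}

/-- The event that `B` visits the level `a` during `[0, T)`. -/
def hitEvent (B : ℝ → Ω → ℝ) (T a : ℝ) : Set Ω := {ω | ∃ s ∈ Ico 0 T, B s ω = a}

/-- The `i`-th increment of `B` along the grid of mesh `h`. -/
def gridIncrement (B : ℝ → Ω → ℝ) (h : ℝ) (i : ℕ) (ω : Ω) : ℝ :=
  B ((i + 1 : ℕ) * h) ω - B (i * h) ω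

lemma walk_gridIncrement (B : ℝ → Ω → ℝ) (h : ℝ) (k : ℕ) (ω : Ω) :
    walk k (gridIncrement B h · ω) = B (k * h) ω - B 0 ω := by
  simpa [walk, gridIncrement] using Finset.sum_range_sub (fun i : ℕ => B (i * h) ω) k

variable [MeasurableSpace Ω] {P : Measure Ω} {B : ℝ → Ω → ℝ}

lemma ae_zero_eq (hB : IsBrownianMotion P B) : ∀ᵐ ω ∂P, B 0 ω = 0 := hB.2.1.mono fun _ h => h.1

lemma ae_continuousOn_Icc (hB : IsBrownianMotion P B) (T : ℝ) :
    ∀ᵐ ω ∂P, ContinuousOn (B · ω) (Icc 0 T) :=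
  hB.2.1.mono fun _ h => h.2.mono Icc_subset_Ici_self

lemma hasLaw_increment (hB : IsBrownianMotion P B) {s t : ℝ} (hs : 0 ≤ s) (hst : s ≤ t) :
    HasLaw (fun ω => B t ω - B s ω) (gaussianReal 0 (t - s).toNNReal) P :=
  ⟨((hB.1 t).sub (hB.1 s)).aemeasurable, hB.2.2.1 s t hs hst⟩

lemma isProbabilityMeasure (hB : IsBrownianMotion P B) : IsProbabilityMeasure P :=
  (hB.hasLaw_increment le_rfl le_rfl).isProbabilityMeasure

lemma hasLaw_apply (hB : IsBrownianMotion P B) {t : ℝ} (ht : 0 ≤ t) :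
    HasLaw (B t) (gaussianReal 0 t.toNNReal) P := by
  have h := hB.hasLaw_increment le_rfl ht
  rw [sub_zero] at h
  exact h.congr (hB.ae_zero_eq.mono fun ω hω => by simp only [hω, sub_zero])

protected lemma neg (hB : IsBrownianMotion P B) : IsBrownianMotion P (fun t ω => -B t ω) := by
  have hsub (s t : ℝ) : (fun ω => -B t ω - -B s ω) = -fun ω => B t ω - B s ω := by
    ext ω
    simp only [Pi.neg_apply]
    ring
  refine ⟨fun t => (hB.1 t).neg, ?_, fun s t hs hst => ?_, fun t ht ht0 => ?_⟩
  · filter_upwards [hB.2.1] with ω hω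
    exact ⟨by rw [hω.1, neg_zero], hω.2.neg⟩
  · rw [hsub]
    simpa using (gaussianReal_neg (hB.hasLaw_increment hs hst)).map_eq
  · have hneg := (hB.2.2.2 t ht ht0).comp (fun _ y => -y) fun _ => measurable_neg
    exact (funext fun i => hsub (t i) (t (i + 1))) ▸ hneg

lemma iIndepFun_gridIncrement (hB : IsBrownianMotion P B) {h : ℝ} (hh : 0 ≤ h) :
    iIndepFun (gridIncrement B h) P :=
  hB.2.2.2 (fun i => i * h) (Nat.mono_cast.mul_const hh) fun i => by positivity

lemma identDistrib_neg_gridIncrement (hB : IsBrownianMotion P B) {h : ℝ} (hh : 0 ≤ h) (i : ℕ) :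
    IdentDistrib (fun ω => -gridIncrement B h i ω) (gridIncrement B h i) P P := by
  have hlaw := hB.hasLaw_increment (s := i * h) (t := (i + 1 : ℕ) * h) (by positivity)
    (by gcongr; exact i.le_succ)
  have hneg := gaussianReal_neg hlaw
  rw [neg_zero] at hneg
  exact hneg.identDistrib hlaw

lemma measure_walk_gridIncrement_ge (hB : IsBrownianMotion P B) {T : ℝ} (hT : 0 ≤ T) (c : ℝ)
    {n : ℕ} (hn : n ≠ 0) :
    P {ω | c ≤ walk n (gridIncrement B (T / n) · ω)} = gaussianReal 0 T.toNNReal (Ici c) := by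
  have hlaw := hB.hasLaw_increment le_rfl hT
  rw [sub_zero] at hlaw
  simp only [walk_gridIncrement, mul_div_cancel₀ T (Nat.cast_ne_zero.2 hn)]
  exact hlaw.measure_eq measurableSet_Ici

lemma measure_hitEvent_le (hB : IsBrownianMotion P B) {T : ℝ} (hT : 0 ≤ T) (a : ℝ) {δ : ℝ}
    (hδ : 0 < δ) : P (hitEvent B T a) ≤ 2 * gaussianReal 0 T.toNNReal (Ici (a - δ)) := by
  refine measure_le_of_ae_frequently_mem
    (G := fun n => {ω | ∃ k ≤ n, a - δ ≤ walk k (gridIncrement B (T / n) · ω)}) ?_ ?_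
  · refine Eventually.frequently ?_
    filter_upwards [eventually_ne_atTop 0] with n hn
    have hh : 0 ≤ T / n := by positivity
    rw [← hB.measure_walk_gridIncrement_ge hT _ hn]
    exact measure_exists_walk_ge_le (hB.iIndepFun_gridIncrement hh)
      (hB.identDistrib_neg_gridIncrement hh) _ n
  · filter_upwards [hB.ae_zero_eq, hB.ae_continuousOn_Icc T] with ω hω0 hω
    rintro ⟨s, hs, rfl⟩
    filter_upwards [eventually_exists_grid_gt hω (Ico_subset_Icc_self hs) (sub_lt_self _ hδ)]
      with n ⟨k, hkn, hk⟩
    exact ⟨k, hkn, by simpa [walk_gridIncrement, hω0] using hk.le⟩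

lemma tendsto_measure_exists_gridIncrement_ge (hB : IsBrownianMotion P B) {T : ℝ} (hT : 0 ≤ T)
    {δ : ℝ} (hδ : 0 < δ) :
    Tendsto (fun n : ℕ => P {ω | ∃ i < n, δ ≤ gridIncrement B (T / n) i ω}) atTop (𝓝 0) := by
  have := hB.isProbabilityMeasure
  have hm (n : ℕ) : MeasurableSet {ω | ∃ i < n, δ ≤ gridIncrement B (T / n) i ω} := by
    simp only [ofPred_exists]
    refine .iUnion fun i => ?_
    exact .inter (.const _) (measurableSet_le measurable_const ((hB.1 _).sub (hB.1 _)))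
  rw [← measure_empty (μ := P)]
  refine tendsto_measure_of_ae_tendsto_indicator_of_isFiniteMeasure atTop .empty hm ?_
  filter_upwards [hB.ae_continuousOn_Icc T] with ω hω
  filter_upwards [eventually_grid_sub_lt hT hω hδ] with n hn
  simpa [gridIncrement] using hn

lemma ae_mem_hitEvent_of_walk_ge (hB : IsBrownianMotion P B) {T a : ℝ} (hT : 0 < T) (ha : 0 ≤ a)
    (n : ℕ) :
    ∀ᵐ ω ∂P, (∃ k ≤ n, a ≤ walk k (gridIncrement B (T / n) · ω)) → ω ∈ hitEvent B T a := by
  have := nullSingletonClass_gaussianReal (μ := 0) (v := T.toNNReal) (by simpa using hT)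
  have hne : ∀ᵐ ω ∂P, B T ω ≠ a := by
    rw [ae_iff]
    simp only [not_not]
    exact ((hB.hasLaw_apply hT.le).measure_eq (measurableSet_singleton a)).trans
      (measure_singleton a)
  filter_upwards [hB.ae_zero_eq, hB.ae_continuousOn_Icc T, hne] with ω hω0 hω hωT
  rintro ⟨k, hkn, hk⟩
  rw [walk_gridIncrement, hω0, sub_zero] at hk
  have hkT := natCast_mul_div_mem_Icc hT.le hkn
  obtain ⟨s, hs, hsa⟩ := intermediate_value_Icc hkT.1 (hω.mono (Icc_subset_Icc_right hkT.2))
    ⟨hω0.trans_le ha, hk⟩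
  refine ⟨s, ⟨hs.1, (hs.2.trans hkT.2).lt_of_ne ?_⟩, hsa⟩
  rintro rfl
  exact hωT hsa

lemma le_measure_hitEvent (hB : IsBrownianMotion P B) {T a δ : ℝ} (hT : 0 < T) (ha : 0 ≤ a)
    (hδ : 0 < δ) : 2 * gaussianReal 0 T.toNNReal (Ici (a + δ)) ≤ P (hitEvent B T a) := by
  have hlim := (hB.tendsto_measure_exists_gridIncrement_ge hT.le hδ).const_add
    (P (hitEvent B T a))
  rw [add_zero] at hlim
  refine ge_of_tendsto hlim ?_
  filter_upwards [eventually_ne_atTop 0] with n hn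
  have hh : 0 ≤ T / n := by positivity
  rw [← hB.measure_walk_gridIncrement_ge hT.le _ hn]
  refine (two_mul_measure_walk_ge_le (hB.iIndepFun_gridIncrement hh)
    (hB.identDistrib_neg_gridIncrement hh) ha hδ n).trans ?_
  exact add_le_add_left (measure_mono_ae (hB.ae_mem_hitEvent_of_walk_ge hT ha n)) _

lemma measureReal_hitEvent_of_nonneg (hB : IsBrownianMotion P B) {T a : ℝ} (hT : 0 < T)
    (ha : 0 ≤ a) : P.real (hitEvent B T a) = 2 * (1 - gaussPhi (a / √T)) := by
  have := hB.isProbabilityMeasure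
  have htail (c : ℝ) :
      (2 * gaussianReal 0 T.toNNReal (Ici c)).toReal = 2 * (1 - gaussPhi (c / √T)) := by
    rw [ENNReal.toReal_mul, ENNReal.toReal_ofNat, ← measureReal_def, gaussianReal_real_Ici hT]
  have hcont : Continuous fun c => 2 * (1 - gaussPhi (c / √T)) := by
    have := continuous_gaussPhi
    fun_prop
  have hleft := (hcont.tendsto a).mono_left (nhdsWithin_le_nhds (s := Iio a))
  have hright := (hcont.tendsto a).mono_left (nhdsWithin_le_nhds (s := Ioi a))
  refine le_antisymm (ge_of_tendsto hleft ?_) (le_of_tendsto hright ?_)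
  · filter_upwards [self_mem_nhdsWithin] with c (hc : c < a)
    have h := hB.measure_hitEvent_le hT.le a (sub_pos.2 hc)
    rw [sub_sub_cancel] at h
    rw [← htail]
    exact ENNReal.toReal_mono (by finiteness) h
  · filter_upwards [self_mem_nhdsWithin] with c (hc : a < c)
    have h := hB.le_measure_hitEvent hT ha (sub_pos.2 hc)
    rw [add_sub_cancel] at h
    rw [← htail]
    exact ENNReal.toReal_mono (by finiteness) h

theorem measureReal_hitEvent (hB : IsBrownianMotion P B) {T : ℝ} (hT : 0 < T) (a : ℝ) :
    P.real (hitEvent B T a) = 2 * (1 - gaussPhi (|a| / √T)) := by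
  rcases le_total 0 a with ha | ha
  · rw [abs_of_nonneg ha, hB.measureReal_hitEvent_of_nonneg hT ha]
  · rw [abs_of_nonpos ha, ← hB.neg.measureReal_hitEvent_of_nonneg hT (neg_nonneg.2 ha)]
    simp only [hitEvent, neg_inj]

end IsBrownianMotion

section Clock

/-- The clock `t ↦ ∫₀ᵗ e^{-2λs} ds` on `[0, ∞]`, which is the quadratic variation of the martingale
`∫ e^{-λs} dW_s`. For `λ > 0` the value at `∞` is the limit `1 / (2λ)`. -/
noncomputable def expClock (lam : ℝ) (t : ℝ≥0∞) : ℝ :=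
  (if t = ⊤ then 1 else 1 - Real.exp (-(2 * lam * t.toReal))) / (2 * lam)

variable {lam : ℝ}

lemma expClock_ofReal {t : ℝ} (ht : 0 ≤ t) :
    expClock lam (ENNReal.ofReal t) = (1 - Real.exp (-(2 * lam * t))) / (2 * lam) := by
  simp [expClock, ENNReal.toReal_ofReal ht]

@[simp]
lemma expClock_zero : expClock lam 0 = 0 := by simp [expClock]

lemma strictMono_expClock (hlam : 0 < lam) : StrictMono (expClock lam) := by
  intro s t hst
  have hs : s ≠ ⊤ := hst.ne_top
  refine div_lt_div_of_pos_right ?_ (by positivity)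
  rw [if_neg hs]
  split_ifs with ht
  · linarith [Real.exp_pos (-(2 * lam * s.toReal))]
  · have := (ENNReal.toReal_lt_toReal hs ht).2 hst
    gcongr

lemma exists_expClock_ofReal_eq (hlam : 0 < lam) {s : ℝ} (hs0 : 0 ≤ s) (hs : s < 1 / (2 * lam)) :
    ∃ t, 0 ≤ t ∧ expClock lam (ENNReal.ofReal t) = s := by
  have hl : 0 < 2 * lam := by positivity
  have hs1 : 0 < 1 - 2 * lam * s := by linarith [(lt_div_iff₀' hl).1 hs]
  have ht : 0 ≤ -Real.log (1 - 2 * lam * s) / (2 * lam) :=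
    div_nonneg (neg_nonneg.2 (Real.log_nonpos hs1.le (by linarith [mul_nonneg hl.le hs0]))) hl.le
  refine ⟨_, ht, ?_⟩
  rw [expClock_ofReal ht, mul_div_cancel₀ _ hl.ne', neg_neg, Real.exp_log hs1, sub_sub_cancel,
    mul_div_cancel_left₀ _ hl.ne']

lemma exists_expClock_iff (hlam : 0 < lam) {r : ℝ≥0∞} {p : ℝ → Prop} :
    (∃ t, 0 ≤ t ∧ ENNReal.ofReal t < r ∧ p ((1 - Real.exp (-(2 * lam * t))) / (2 * lam))) ↔
      ∃ s ∈ Ico 0 (expClock lam r), p s := by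
  have hmono := strictMono_expClock hlam
  constructor
  · rintro ⟨t, ht, htr, hp⟩
    rw [← expClock_ofReal ht] at hp
    exact ⟨_, ⟨by simpa using hmono.monotone zero_le, hmono htr⟩, hp⟩
  · rintro ⟨s, ⟨hs0, hsr⟩, hp⟩
    have hs : s < 1 / (2 * lam) := by
      simpa [expClock] using hsr.trans_le (hmono.monotone le_top)
    obtain ⟨t, ht, rfl⟩ := exists_expClock_ofReal_eq hlam hs0 hs
    exact ⟨t, ht, hmono.lt_iff_lt.1 hsr, by rwa [← expClock_ofReal ht]⟩

end Clock

theorem prob_of_hitting_event_general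
    {Ω : Type*} [MeasurableSpace Ω] {P : Measure Ω} {B : ℝ → Ω → ℝ} (hB : IsBrownianMotion P B)
    {lam ε : ℝ} (z : ℝ) (hlam : 0 < lam) (hε : 0 < ε) {r : ℝ≥0∞} (hr : 0 < r) :
    (P {ω | ∃ t : ℝ, 0 ≤ t ∧ ENNReal.ofReal t < r ∧
        ε * B ((1 - Real.exp (-(2 * lam * t))) / (2 * lam)) ω = z}).toReal
      = 2 * (1 - gaussPhi (|z| * Real.sqrt (2 * lam)
          / (ε * Real.sqrt (if r = ⊤ then 1 else 1 - Real.exp (-(2 * lam * r.toReal)))))) := by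
  have hclock : 0 < expClock lam r := by simpa using strictMono_expClock hlam hr
  have hevent : {ω | ∃ t : ℝ, 0 ≤ t ∧ ENNReal.ofReal t < r ∧
      ε * B ((1 - Real.exp (-(2 * lam * t))) / (2 * lam)) ω = z}
      = IsBrownianMotion.hitEvent B (expClock lam r) (z / ε) := by
    ext ω
    simpa only [IsBrownianMotion.hitEvent, mem_ofPred_eq, eq_div_iff hε.ne', mul_comm ε]
      using exists_expClock_iff hlam (p := fun s => B s ω * ε = z)
  rw [hevent, ← measureReal_def, hB.measureReal_hitEvent hclock, abs_div, abs_of_pos hε, expClock,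
    Real.sqrt_div' _ (by positivity), div_div_div_eq]

/-- Lemma 2: for `λ > 0`, `ε > 0`, `z ∈ ℝ` and `r ∈ (0, ∞]`,
`P(∃ t ∈ [0, r), ε B((1 - e^{-2λt})/(2λ)) = z)
  = 2 (1 - Φ(|z| √(2λ) / (ε √(1 - e^{-2λr}))))`,
where for `r = ∞` one reads `e^{-2λr} = 0`. -/
theorem prob_of_hitting_event
    {Ω : Type*} [MeasurableSpace Ω] (P : Measure Ω) [IsProbabilityMeasure P]
    (hPc : P.IsComplete)
    (B : ℝ → Ω → ℝ) (hB : IsBrownianMotion P B)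
    (lam ε z : ℝ) (hlam : 0 < lam) (hε : 0 < ε)
    (r : ℝ≥0∞) (hr : 0 < r) :
    (P {ω | ∃ t : ℝ, 0 ≤ t ∧ ENNReal.ofReal t < r ∧
        ε * B ((1 - Real.exp (-(2 * lam * t))) / (2 * lam)) ω = z}).toReal
      = 2 * (1 - gaussPhi (|z| * Real.sqrt (2 * lam)
          / (ε * Real.sqrt (if r = ⊤ then 1 else 1 - Real.exp (-(2 * lam * r.toReal)))))) :=
  prob_of_hitting_event_general hB z hlam hε hr
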